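/- The module (S/J) ⊗_{ℂ[z₁,z₂]} ℂ[z₁,z₂]_{(z₁,z₂)} obtained from S/J by localizing the base ring ℂ[z₁,z₂] at the maximal ideal (z₁,z₂) is not a free module over the local ring ℂ[z₁,z₂]_{(z₁,z₂)}. -/

import Mathlib

/-!
The images of `z₁, z₂` in the local ring `R_P` form a regular sequence, so in a free `R_P`-module
a relation `z₂ • a = z₁ • b` forces `a` to be a multiple of `z₁` (`exists_smul_of_free`). Applied
to the relation `z₂ w₁ = z₁ w₂` in the localization of `S/J`, freeness would give
`w₁ = z₁ • m`, that is `t w₁ - z₁ m ∈ J` for some `t ∈ R` with `t(0) ≠ 0` and some `m ∈ S`.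
This is impossible: every element of `J` vanishes to order at least two at the origin, whereas
the coefficient of `w₁` in `t w₁ - z₁ m` is `t(0)`.
-/

open MvPolynomial

/-- The coordinate `z₁` in `S = ℂ[z₁,z₂,w₁,w₂]`. -/
noncomputable def z₁ : MvPolynomial (Fin 4) ℂ := X 0
/-- The coordinate `z₂`. -/
noncomputable def z₂ : MvPolynomial (Fin 4) ℂ := X 1
/-- The coordinate `w₁`. -/
noncomputable def w₁ : MvPolynomial (Fin 4) ℂ := X 2
/-- The coordinate `w₂`. -/
noncomputable def w₂ : MvPolynomial (Fin 4) ℂ := X 3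

/-- The ideal `J = (w₁², w₂², w₁w₂, z₂w₁ − z₁w₂)` of Example 3.5. -/
noncomputable def J : Ideal (MvPolynomial (Fin 4) ℂ) :=
  Ideal.span {w₁ ^ 2, w₂ ^ 2, w₁ * w₂, z₂ * w₁ - z₁ * w₂}

/-- The inclusion `R = ℂ[z₁,z₂] ⊆ S = ℂ[z₁,z₂,w₁,w₂]`, making `S` (and hence `S/J`)
an `R`-algebra. -/
noncomputable instance : Algebra (MvPolynomial (Fin 2) ℂ) (MvPolynomial (Fin 4) ℂ) :=
  (rename (Fin.castLE (by norm_num : 2 ≤ 4))).toRingHom.toAlgebra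

/-- The maximal ideal `(z₁, z₂)` of `R = ℂ[z₁,z₂]`. -/
noncomputable def P : Ideal (MvPolynomial (Fin 2) ℂ) := Ideal.span {X 0, X 1}

lemma mem_P_iff (f : MvPolynomial (Fin 2) ℂ) : f ∈ P ↔ constantCoeff f = 0 := by
  have hP : P = Ideal.span (X '' (Set.univ : Set (Fin 2))) := by
    rw [P]
    congr 1
    ext f
    simp [Fin.exists_fin_two, eq_comm]
  rw [hP, mem_ideal_span_X_image]
  constructor
  · intro h
    by_contra h0
    obtain ⟨i, -, hi⟩ := h 0 (by simpa [constantCoeff_eq] using h0)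
    exact hi rfl
  · intro h m hm
    by_contra! hi
    have hm0 : m = 0 := by
      ext i
      exact hi i trivial
    subst hm0
    exact (mem_support_iff.mp hm) h

lemma P_isPrime : P.IsPrime := by
  have h : P = RingHom.ker (constantCoeff : MvPolynomial (Fin 2) ℂ →+* ℂ) := by
    ext f
    rw [mem_P_iff, RingHom.mem_ker]
  rw [h]
  exact RingHom.ker_isPrime _

lemma dvd_of_X_mul_eq {s f g : MvPolynomial (Fin 2) ℂ} (hs : s ∉ P)
    (h : X 1 * s * f = X 0 * g) : (X 0 : MvPolynomial (Fin 2) ℂ) ∣ f := by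
  have hp : Prime (X 0 : MvPolynomial (Fin 2) ℂ) := X_prime
  rcases hp.dvd_or_dvd (Dvd.intro _ h.symm) with h1 | h1
  · rcases hp.dvd_or_dvd h1 with h2 | h2
    · rw [X_dvd_X] at h2
      exact absurd h2 (by decide)
    · obtain ⟨c, rfl⟩ := h2
      exact absurd ((mem_P_iff _).mpr (by simp)) hs
  · exact h1

/-- `z₂` is a nonzerodivisor modulo `z₁` in the local ring `R_P`. -/
lemma localization_dvd [P.IsPrime] {a b : Localization P.primeCompl}
    (h : algebraMap (MvPolynomial (Fin 2) ℂ) _ (X 1) * a =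
      algebraMap (MvPolynomial (Fin 2) ℂ) _ (X 0) * b) :
    algebraMap (MvPolynomial (Fin 2) ℂ) (Localization P.primeCompl) (X 0) ∣ a := by
  obtain ⟨f, s, rfl⟩ := IsLocalization.exists_mk'_eq P.primeCompl a
  obtain ⟨g, t, rfl⟩ := IsLocalization.exists_mk'_eq P.primeCompl b
  rw [IsLocalization.mul_mk'_eq_mk'_of_mul, IsLocalization.mul_mk'_eq_mk'_of_mul,
    IsLocalization.mk'_eq_iff_eq, (IsLocalization.injective (Localization P.primeCompl)
      P.primeCompl_le_nonZeroDivisors).eq_iff] at h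
  obtain ⟨c, rfl⟩ := dvd_of_X_mul_eq (f := f) (s := t) (g := s * g) t.2 (by linear_combination h)
  exact ⟨IsLocalization.mk' _ c s, (IsLocalization.mul_mk'_eq_mk'_of_mul ..).symm⟩

/-- In a free `R_P`-module `F`, multiplication by `z₂` is injective on `F / z₁ F`. -/
lemma exists_smul_of_free [P.IsPrime] {F : Type*} [AddCommMonoid F]
    [Module (Localization P.primeCompl) F] [Module.Free (Localization P.primeCompl) F] {a b : F}
    (h : algebraMap (MvPolynomial (Fin 2) ℂ) (Localization P.primeCompl) (X 1) • a =
      algebraMap (MvPolynomial (Fin 2) ℂ) (Localization P.primeCompl) (X 0) • b) :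
    ∃ c : F, a = algebraMap (MvPolynomial (Fin 2) ℂ) (Localization P.primeCompl) (X 0) • c := by
  let B := Module.Free.chooseBasis (Localization P.primeCompl) F
  have hi : ∀ i, algebraMap (MvPolynomial (Fin 2) ℂ) (Localization P.primeCompl) (X 0) ∣
      B.repr a i := fun i => localization_dvd (b := B.repr b i) (by
    simpa [Algebra.smul_def] using congrArg (fun v => B.repr v i) h)
  choose c hc using hi
  refine ⟨∑ i ∈ (B.repr a).support, c i • B i, ?_⟩
  conv_lhs => rw [← B.linearCombination_repr a]
  rw [Finsupp.linearCombination_apply, Finsupp.sum, Finset.smul_sum]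
  exact Finset.sum_congr rfl fun i _ => by rw [smul_smul, ← hc]

/-- Elements of `J` vanish to order at least two at the origin; only the vanishing of the constant
coefficient and of the coefficient of `w₁` is recorded. -/
lemma J_order_two {f : MvPolynomial (Fin 4) ℂ} (hf : f ∈ J) :
    constantCoeff f = 0 ∧ constantCoeff (pderiv 2 f) = 0 := by
  rw [J] at hf
  induction hf using Submodule.span_induction with
  | mem x hx =>
    rcases hx with rfl | rfl | rfl | rfl <;>
      simp [z₁, z₂, w₁, w₂, pderiv_X, Derivation.leibniz_pow]
  | zero => simp
  | add x y _ _ hx hy => simp [hx, hy]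
  | smul a x _ hx => simp [hx]

lemma algebraMap_eq_rename (f : MvPolynomial (Fin 2) ℂ) :
    algebraMap (MvPolynomial (Fin 2) ℂ) (MvPolynomial (Fin 4) ℂ) f =
      rename (Fin.castLE (by norm_num : 2 ≤ 4)) f := rfl

/-- The localization of `S/J` at the maximal ideal `(z₁,z₂)` of `R = ℂ[z₁,z₂]` is not a
free module over the local ring `R_{(z₁,z₂)}`. -/
theorem stmt3 :
    ∃ hP : P.IsPrime,
      letI := hP
      ¬ Module.Free (Localization P.primeCompl)
          (LocalizedModule P.primeCompl (MvPolynomial (Fin 4) ℂ ⧸ J)) := by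
  refine ⟨P_isPrime, ?_⟩
  intro hfree
  have := P_isPrime
  have hrel : algebraMap (MvPolynomial (Fin 2) ℂ) (Localization P.primeCompl) (X 1) •
      LocalizedModule.mkLinearMap P.primeCompl (MvPolynomial (Fin 4) ℂ ⧸ J)
        (Ideal.Quotient.mk J w₁) =
      algebraMap (MvPolynomial (Fin 2) ℂ) (Localization P.primeCompl) (X 0) •
      LocalizedModule.mkLinearMap P.primeCompl (MvPolynomial (Fin 4) ℂ ⧸ J)
        (Ideal.Quotient.mk J w₂) := by
    rw [algebraMap_smul, algebraMap_smul,
      ← (LocalizedModule.mkLinearMap P.primeCompl (MvPolynomial (Fin 4) ℂ ⧸ J)).map_smul,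
      ← (LocalizedModule.mkLinearMap P.primeCompl (MvPolynomial (Fin 4) ℂ ⧸ J)).map_smul]
    congr 1
    change Ideal.Quotient.mk J (X 1 • w₁) = Ideal.Quotient.mk J (X 0 • w₂)
    rw [Ideal.Quotient.eq, Algebra.smul_def, Algebra.smul_def, algebraMap_eq_rename,
      algebraMap_eq_rename, rename_X, rename_X]
    exact Ideal.subset_span (by simp [z₁, z₂])
  obtain ⟨c, hc⟩ := exists_smul_of_free
    (F := LocalizedModule P.primeCompl (MvPolynomial (Fin 4) ℂ ⧸ J)) hrel
  obtain ⟨⟨m, s⟩, hm⟩ := IsLocalizedModule.surj P.primeCompl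
    (LocalizedModule.mkLinearMap P.primeCompl (MvPolynomial (Fin 4) ℂ ⧸ J)) c
  obtain ⟨m, rfl⟩ := Ideal.Quotient.mk_surjective m
  rw [algebraMap_smul] at hc
  have h2 : LocalizedModule.mkLinearMap P.primeCompl (MvPolynomial (Fin 4) ℂ ⧸ J)
        ((s : MvPolynomial (Fin 2) ℂ) • Ideal.Quotient.mk J w₁) =
      LocalizedModule.mkLinearMap P.primeCompl (MvPolynomial (Fin 4) ℂ ⧸ J)
        ((X 0 : MvPolynomial (Fin 2) ℂ) • Ideal.Quotient.mk J m) := by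
    have hm' : (s : MvPolynomial (Fin 2) ℂ) • c =
        LocalizedModule.mkLinearMap P.primeCompl (MvPolynomial (Fin 4) ℂ ⧸ J)
          (Ideal.Quotient.mk J m) := hm
    rw [LinearMap.map_smul, LinearMap.map_smul, ← hm', hc, smul_comm]
  obtain ⟨u, hu⟩ := (IsLocalizedModule.eq_iff_exists P.primeCompl _).mp h2
  have hu' : Ideal.Quotient.mk J ((u : MvPolynomial (Fin 2) ℂ) • (s : MvPolynomial (Fin 2) ℂ) • w₁)
      = Ideal.Quotient.mk J ((u : MvPolynomial (Fin 2) ℂ) • (X 0 : MvPolynomial (Fin 2) ℂ) • m) :=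
    hu
  rw [Ideal.Quotient.eq] at hu'
  have h0 := (J_order_two hu').2
  simp only [Algebra.smul_def, algebraMap_eq_rename, rename_X] at h0
  have hcast : (Fin.castLE (by norm_num : 2 ≤ 4) (0 : Fin 2)) = (0 : Fin 4) := rfl
  rw [hcast] at h0
  simp [w₁, pderiv_X, constantCoeff_rename] at h0
  rcases h0 with h0 | h0
  · exact u.2 ((mem_P_iff _).mpr h0)
  · exact s.2 ((mem_P_iff _).mpr h0)
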